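/- Let Ω be a nonempty finite set, p a full-support probability vector on Ω, n ≥ 1, and for each ω ∈ Ω let v^ω : Δ(Ω)^n → ℝ be bounded and upper semicontinuous. Then the value Val of the persuasion problem equals the infimum of ∑_{ω∈Ω} p(ω)·V^ω over all real numbers V^ω (ω ∈ Ω) and continuous functions φ_i^ω : Δ(Ω) → ℝ (i ∈ {1,…,n}, ω ∈ Ω) satisfying (a) v^ω(x_1,…,x_n) ≤ V^ω + ∑_{i=1}^n φ_i^ω(x_i) for all (x_1,…,x_n) ∈ Δ(Ω)^n and all ω ∈ Ω, and (b) ∑_{ω∈Ω} x(ω)·φ_i^ω(x) = 0 for all x ∈ Δ(Ω) and all i. -/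

import Mathlib

open MeasureTheory

noncomputable section

abbrev Belief (Ω : Type) [Fintype Ω] : Type := stdSimplex ℝ Ω

variable {Ω : Type} [Fintype Ω] [MeasurableSpace Ω] [MeasurableSingletonClass Ω]

/-- The joint distribution of state and beliefs. -/
def jointP (p : Ω → ℝ) {X : Type} [MeasurableSpace X] (μ : Ω → Measure X) :
    Measure (Ω × X) :=
  ∑ ω : Ω, ENNReal.ofReal (p ω) • ((Measure.dirac ω).prod (μ ω))

/-- Feasibility of a collection of conditional belief distributions, n receivers. -/
def Feasible (p : Ω → ℝ) (n : ℕ) (μ : Ω → Measure (Fin n → Belief Ω)) : Prop :=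
  (∀ ω, IsProbabilityMeasure (μ ω)) ∧
  ∀ (i : Fin n) (ω' : Ω),
    (fun z : Ω × (Fin n → Belief Ω) => (z.2 i).1 ω')
      =ᵐ[jointP p μ]
      (jointP p μ)[Set.indicator {z : Ω × (Fin n → Belief Ω) | z.1 = ω'} (fun _ => (1 : ℝ)) |
        MeasurableSpace.comap (fun z : Ω × (Fin n → Belief Ω) => z.2 i) inferInstance]

/-- Feasibility of a collection of conditional belief distributions, single receiver. -/
def Feasible1 (p : Ω → ℝ) (lam : Ω → Measure (Belief Ω)) : Prop :=
  (∀ ω, IsProbabilityMeasure (lam ω)) ∧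
  ∀ ω' : Ω,
    (fun z : Ω × Belief Ω => (z.2).1 ω')
      =ᵐ[jointP p lam]
      (jointP p lam)[Set.indicator {z : Ω × Belief Ω | z.1 = ω'} (fun _ => (1 : ℝ)) |
        MeasurableSpace.comap (fun z : Ω × Belief Ω => z.2) inferInstance]

/-- the value of the persuasion problem -/
def Val (p : Ω → ℝ) (n : ℕ) (v : Ω → (Fin n → Belief Ω) → ℝ) : ℝ :=
  sSup { r | ∃ μ : Ω → Measure (Fin n → Belief Ω),
    Feasible p n μ ∧ r = ∑ ω : Ω, p ω * ∫ x, v ω x ∂(μ ω) }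

end

/-!
Both sides are values of a pair of dual linear programs on the compact space `Z = Ω × Δ(Ω)ⁿ`.
Testing conditional expectations against continuous functions, and disintegrating along the state,
one sees that the joint distributions of feasible collections are exactly the probability measures
on `Z` that annihilate the space `K` of functions `W ω + ∑ i, φ i ω (x i)` with
`∑ ω, p ω * W ω = 0` and `∑ ω, x ω * φ i ω x = 0`. The dual problem is to minimise `c` subject to
`v ≤ c + k` with `k ∈ K`.

Strong duality holds for every subspace `K` of `C(Z)` without strictly positive elements. The dual
value is a sublinear functional of the bounded function `v`, so by Hahn–Banach some linear
functional below it agrees with it at the given `v`. This functional is positive, unital and zero on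
`K`, hence by Riesz its restriction to `C(Z)` is integration against a probability measure `P`. As
the upper semicontinuous `v` is a limit of continuous functions from above, `∫ v ∂P` attains the
dual value.
-/

open Filter Topology Set Function
open scoped BoundedContinuousFunction ENNReal Pointwise

section LipschitzEnvelope

variable {X : Type*} [PseudoMetricSpace X] {v : X → ℝ} {C : ℝ}

/-- The Pasch–Hausdorff envelope of `v`: the least `k`-Lipschitz function above `v`, for `v` bounded
above. -/
noncomputable def lipschitzEnvelope (v : X → ℝ) (k : ℕ) (x : X) : ℝ :=
  ⨆ y, v y - k * dist x y

lemma lipschitzEnvelope_le (hC : ∀ x, v x ≤ C) (k : ℕ) (x : X) : lipschitzEnvelope v k x ≤ C :=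
  have : Nonempty X := ⟨x⟩
  ciSup_le fun y => (sub_le_self _ (by positivity)).trans (hC y)

lemma sub_mul_dist_le_lipschitzEnvelope (hC : ∀ x, v x ≤ C) (k : ℕ) (x y : X) :
    v y - k * dist x y ≤ lipschitzEnvelope v k x :=
  le_ciSup (f := fun y => v y - k * dist x y)
    ⟨C, forall_mem_range.2 fun y => (sub_le_self _ (by positivity)).trans (hC y)⟩ y

lemma le_lipschitzEnvelope (hC : ∀ x, v x ≤ C) (k : ℕ) (x : X) : v x ≤ lipschitzEnvelope v k x := by
  simpa using sub_mul_dist_le_lipschitzEnvelope hC k x x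

lemma lipschitzWith_lipschitzEnvelope (hC : ∀ x, v x ≤ C) (k : ℕ) :
    LipschitzWith k (lipschitzEnvelope v k) := by
  refine LipschitzWith.of_le_add_mul _ fun x x' => ?_
  have : Nonempty X := ⟨x⟩
  refine ciSup_le fun y => ?_
  have htri : (k : ℝ) * dist x' y ≤ k * (dist x x' + dist x y) := by
    gcongr
    exact dist_comm x x' ▸ dist_triangle x' x y
  have hx' := sub_mul_dist_le_lipschitzEnvelope hC k x' y
  rw [NNReal.coe_natCast]
  linarith

lemma tendsto_lipschitzEnvelope (hC : ∀ x, v x ≤ C) {x : X} (hv : UpperSemicontinuousAt v x) :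
    Tendsto (fun k => lipschitzEnvelope v k x) atTop (𝓝 (v x)) := by
  refine tendsto_order.2
    ⟨fun a ha => .of_forall fun k => ha.trans_le (le_lipschitzEnvelope hC k x), fun a ha => ?_⟩
  obtain ⟨b, hvb, hba⟩ := exists_between ha
  obtain ⟨δ, hδ, hnear⟩ := Metric.eventually_nhds_iff.1 (hv b hvb)
  obtain ⟨K, hK⟩ := exists_nat_gt ((C - b) / δ)
  filter_upwards [eventually_ge_atTop K] with k hk
  have : Nonempty X := ⟨x⟩
  refine (ciSup_le fun y => ?_).trans_lt hba
  rcases lt_or_ge (dist y x) δ with hy | hy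
  · exact (sub_le_self _ (by positivity)).trans (hnear hy).le
  · have hfar : C - b ≤ k * dist x y := calc
      C - b ≤ K * δ := ((div_lt_iff₀ hδ).1 hK).le
      _ ≤ k * dist x y := by rw [dist_comm]; gcongr
    linarith [hC y]

end LipschitzEnvelope

lemma exists_seq_continuousMap_tendsto_of_upperSemicontinuous {X : Type*}
    [TopologicalSpace X] [TopologicalSpace.PseudoMetrizableSpace X] {v : X → ℝ} {C : ℝ}
    (hv : UpperSemicontinuous v) (hC : ∀ x, v x ≤ C) :
    ∃ g : ℕ → C(X, ℝ), (∀ k x, v x ≤ g k x ∧ g k x ≤ C) ∧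
      ∀ x, Tendsto (fun k => g k x) atTop (𝓝 (v x)) := by
  let _ := TopologicalSpace.pseudoMetrizableSpacePseudoMetric X
  exact ⟨fun k => ⟨lipschitzEnvelope v k, (lipschitzWith_lipschitzEnvelope hC k).continuous⟩,
    fun k x => ⟨le_lipschitzEnvelope hC k x, lipschitzEnvelope_le hC k x⟩,
    fun x => tendsto_lipschitzEnvelope hC (hv x)⟩

lemma upperSemicontinuous_uncurry {ι X : Type*} [TopologicalSpace ι] [DiscreteTopology ι]
    [TopologicalSpace X] {v : ι → X → ℝ} (hv : ∀ i, UpperSemicontinuous (v i)) :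
    UpperSemicontinuous (uncurry v) := by
  rintro ⟨i, x⟩ y hy
  rw [nhds_prod_eq, nhds_discrete, pure_prod, eventually_map]
  exact hv i x y hy

section Functionals

lemma exists_linearMap_le_sublinear_eq {E : Type*} [AddCommGroup E] [Module ℝ E] (N : E → ℝ)
    (hsmul : ∀ c : ℝ, 0 < c → ∀ x, N (c • x) = c * N x) (hadd : ∀ x y, N (x + y) ≤ N x + N y)
    (x₀ : E) : ∃ L : E →ₗ[ℝ] ℝ, (∀ x, L x ≤ N x) ∧ L x₀ = N x₀ := by
  have hzero : N 0 = 0 := by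
    have := hsmul 2 two_pos 0
    rw [smul_zero] at this
    linarith
  have hspan : ∀ c : ℝ, c • x₀ = 0 → c • N x₀ = 0 := fun c hc => by
    rcases smul_eq_zero.1 hc with rfl | rfl
    · rw [zero_smul]
    · rw [hzero, smul_zero]
  have hmul_le : ∀ t : ℝ, t * N x₀ ≤ N (t • x₀) := fun t => by
    rcases lt_trichotomy t 0 with ht | rfl | ht
    · have := hadd (t • x₀) (-t • x₀)
      rw [← add_smul, add_neg_cancel, zero_smul, hzero, hsmul (-t) (neg_pos.2 ht)] at this
      linarith
    · rw [zero_mul, zero_smul, hzero]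
    · rw [hsmul t ht]
  obtain ⟨L, hext, hL⟩ := exists_extension_of_le_sublinear
    (LinearPMap.mkSpanSingleton' x₀ (N x₀) hspan) N hsmul hadd <| by
      rintro ⟨_, hx⟩
      obtain ⟨t, rfl⟩ := Submodule.mem_span_singleton.1 hx
      exact (LinearPMap.mkSpanSingleton'_apply x₀ _ hspan t hx).trans_le (hmul_le t)
  exact ⟨L, hL, (hext ⟨x₀, Submodule.mem_span_singleton_self x₀⟩).trans
    (LinearPMap.mkSpanSingleton'_apply_self x₀ _ hspan _)⟩

lemma exists_isProbabilityMeasure_forall_integral_eq {X : Type*} [TopologicalSpace X]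
    [CompactSpace X] [T2Space X] [MeasurableSpace X] [BorelSpace X] (L : C(X, ℝ) →ₗ[ℝ] ℝ)
    (hpos : ∀ f, 0 ≤ f → 0 ≤ L f) (hone : L 1 = 1) :
    ∃ P : Measure X, IsProbabilityMeasure P ∧ ∀ f : C(X, ℝ), ∫ x, f x ∂P = L f := by
  let Λ : CompactlySupportedContinuousMap X ℝ →ₚ[ℝ] ℝ := PositiveLinearMap.mk₀
    { toFun := fun f => L f.toContinuousMap
      map_add' := fun f g => map_add L f.toContinuousMap g.toContinuousMap
      map_smul' := fun c f => map_smul L c f.toContinuousMap }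
    fun f hf => hpos _ hf
  have hint : ∀ f : C(X, ℝ), ∫ x, f x ∂(RealRMK.rieszMeasure Λ) = L f := fun f =>
    RealRMK.integral_rieszMeasure Λ (CompactlySupportedContinuousMap.continuousMapEquiv f)
  have hreal : (RealRMK.rieszMeasure Λ).real univ = 1 := by
    simpa only [ContinuousMap.one_apply, integral_const, smul_eq_mul, mul_one, hone] using hint 1
  exact ⟨RealRMK.rieszMeasure Λ, ⟨(ENNReal.toReal_eq_one_iff _).1 hreal⟩, hint⟩

end Functionals

section ConditionalExpectation

lemma ae_eq_zero_of_forall_integral_boundedContinuous_mul_eq_zero {Y : Type*} [MeasurableSpace Y]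
    [TopologicalSpace Y] [BorelSpace Y] [HasOuterApproxClosed Y] {ν : Measure Y} {s : Y → ℝ}
    (hs : Integrable s ν) (h : ∀ f : Y →ᵇ ℝ, ∫ y, f y * s y ∂ν = 0) : s =ᵐ[ν] 0 := by
  refine ae_eq_zero_of_forall_setIntegral_isClosed_eq_zero hs fun F hF => ?_
  have hle (k y) : ‖(hF.apprSeq k y : ℝ)‖ ≤ 1 := by
    rw [Real.norm_of_nonneg (NNReal.coe_nonneg _)]
    exact_mod_cast HasOuterApproxClosed.apprSeq_apply_le_one hF k y
  let f (k : ℕ) : Y →ᵇ ℝ := BoundedContinuousFunction.ofNormedAddCommGroup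
    (fun y => hF.apprSeq k y) (NNReal.continuous_coe.comp (hF.apprSeq k).continuous) 1 (hle k)
  have hlim : Tendsto (fun k => ∫ y, f k y * s y ∂ν) atTop (𝓝 (∫ y, F.indicator s y ∂ν)) := by
    refine tendsto_integral_of_dominated_convergence (fun y => ‖s y‖)
      (fun k => (f k).continuous.aestronglyMeasurable.mul hs.1) hs.norm
      (fun k => .of_forall fun y => ?_) (.of_forall fun y => ?_)
    · rw [norm_mul]
      exact mul_le_of_le_one_left (norm_nonneg _) (hle k y)
    · have happr := tendsto_pi_nhds.1 (HasOuterApproxClosed.tendsto_apprSeq hF) y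
      have hind : F.indicator s y = ((F.indicator (fun _ => 1) y : NNReal) : ℝ) * s y := by
        by_cases hy : y ∈ F <;> simp [hy]
      rw [hind]
      exact ((NNReal.continuous_coe.tendsto _).comp happr).mul_const (s y)
  simp_rw [h] at hlim
  rw [← integral_indicator hF.measurableSet]
  exact tendsto_nhds_unique hlim tendsto_const_nhds

variable {Z Y : Type*} [MeasurableSpace Z] [MeasurableSpace Y] {P : Measure Z} [IsFiniteMeasure P]
  {T : Z → Y} {g : Z → ℝ}

lemma integral_comp_mul_condExp_comap [TopologicalSpace Y] [BorelSpace Y] (hT : Measurable T)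
    (hg : Integrable g P) (f : Y →ᵇ ℝ) :
    ∫ z, f (T z) * (P[g | MeasurableSpace.comap T inferInstance]) z ∂P =
      ∫ z, f (T z) * g z ∂P := by
  have hpull := condExp_stronglyMeasurable_mul_of_bound hT.comap_le (f := f ∘ T)
    (f.continuous.measurable.comp (comap_measurable T)).stronglyMeasurable hg ‖f‖
    (.of_forall fun z => f.norm_coe_le_norm (T z))
  calc ∫ z, f (T z) * (P[g | MeasurableSpace.comap T inferInstance]) z ∂P
      = ∫ z, (P[(f ∘ T) * g | MeasurableSpace.comap T inferInstance]) z ∂P :=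
        (integral_congr_ae hpull).symm
    _ = ∫ z, f (T z) * g z ∂P := integral_condExp hT.comap_le

lemma comp_ae_eq_condExp_comap_iff [TopologicalSpace Y] [BorelSpace Y] [HasOuterApproxClosed Y]
    (hT : Measurable T) (hg : Integrable g P) {h : Y → ℝ} (hh : Integrable h (P.map T)) :
    (fun z => h (T z)) =ᵐ[P] P[g | MeasurableSpace.comap T inferInstance] ↔
      ∀ f : Y →ᵇ ℝ, ∫ z, f (T z) * h (T z) ∂P = ∫ z, f (T z) * g z ∂P := by
  refine ⟨fun hae f => ?_, fun htest => ?_⟩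
  · rw [← integral_comp_mul_condExp_comap hT hg f]
    refine integral_congr_ae ?_
    filter_upwards [hae] with z hz
    rw [hz]
  · obtain ⟨s, hs, hsT⟩ := (stronglyMeasurable_condExp (μ := P) (f := g)
      (m := MeasurableSpace.comap T inferInstance)).exists_eq_measurable_comp
    have hsint : Integrable s (P.map T) := by
      rw [integrable_map_measure hs.aestronglyMeasurable hT.aemeasurable, ← hsT]
      exact integrable_condExp
    have hdiff : h - s =ᵐ[P.map T] 0 := by
      refine ae_eq_zero_of_forall_integral_boundedContinuous_mul_eq_zero (hh.sub hsint) fun f => ?_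
      have hf_bdd : ∀ᵐ y ∂P.map T, ‖f y‖ ≤ ‖f‖ := .of_forall f.norm_coe_le_norm
      have hf_meas := f.continuous.aestronglyMeasurable (μ := P.map T)
      simp_rw [Pi.sub_apply, mul_sub]
      rw [integral_sub (hh.bdd_mul hf_meas hf_bdd) (hsint.bdd_mul hf_meas hf_bdd),
        integral_map hT.aemeasurable (hf_meas.fun_mul hh.1),
        integral_map hT.aemeasurable (hf_meas.fun_mul hsint.1), htest f,
        ← integral_comp_mul_condExp_comap hT hg f, hsT, sub_eq_zero]
      rfl
    filter_upwards [ae_of_ae_map hT.aemeasurable hdiff] with z hz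
    rw [hsT]
    exact sub_eq_zero.1 hz

end ConditionalExpectation

section Duality

variable {Z : Type*} [TopologicalSpace Z] {K : Submodule ℝ C(Z, ℝ)} {v w : Z → ℝ} {a c : ℝ}

/-- The values of the linear program dual to maximising `∫ v ∂P` over the probability measures `P`
that annihilate `K`: a constant `c` together with `k ∈ K` such that `v ≤ c + k`. -/
def dualValues (K : Submodule ℝ C(Z, ℝ)) (v : Z → ℝ) : Set ℝ :=
  {c | ∃ k ∈ K, ∀ z, v z ≤ c + k z}

lemma mem_dualValues_of_forall_le (h : ∀ z, v z ≤ c) : c ∈ dualValues K v :=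
  ⟨0, K.zero_mem, fun z => (h z).trans_eq (add_zero c).symm⟩

lemma zero_mem_dualValues {k : C(Z, ℝ)} (hk : k ∈ K) : 0 ∈ dualValues K k :=
  ⟨k, hk, fun _ => (zero_add _).ge⟩

lemma le_of_mem_dualValues (hK : ∀ k ∈ K, ∃ z, k z ≤ 0) (ha : ∀ z, a ≤ v z)
    (hc : c ∈ dualValues K v) : a ≤ c := by
  obtain ⟨k, hk, hvk⟩ := hc
  obtain ⟨z, hz⟩ := hK k hk
  linarith [ha z, hvk z]

lemma dualValues_add_subset : dualValues K v + dualValues K w ⊆ dualValues K (v + w) := by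
  rintro _ ⟨c, ⟨k, hk, hvk⟩, d, ⟨l, hl, hwl⟩, rfl⟩
  exact ⟨k + l, K.add_mem hk hl, fun z =>
    (add_le_add (hvk z) (hwl z)).trans_eq (add_add_add_comm c (k z) d (l z))⟩

lemma smul_dualValues_subset (hc : 0 ≤ c) : c • dualValues K v ⊆ dualValues K (c • v) := by
  rintro _ ⟨d, ⟨k, hk, hvk⟩, rfl⟩
  exact ⟨c • k, K.smul_mem c hk, fun z =>
    (mul_le_mul_of_nonneg_left (hvk z) hc).trans_eq (mul_add c d (k z))⟩

lemma dualValues_smul (hc : 0 < c) : dualValues K (c • v) = c • dualValues K v := by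
  refine (smul_dualValues_subset hc.le).antisymm' ?_
  rw [← Set.preimage_smul_inv₀ hc.ne']
  refine fun d hd => ?_
  have := smul_dualValues_subset (inv_nonneg.2 hc.le) (Set.smul_mem_smul_set hd)
  rwa [inv_smul_smul₀ hc.ne'] at this

lemma exists_linearMap_forall_le_dualValues (hK : ∀ k ∈ K, ∃ z, k z ≤ 0)
    (v : lp (fun _ : Z => ℝ) ∞) :
    ∃ L : lp (fun _ : Z => ℝ) ∞ →ₗ[ℝ] ℝ,
      (∀ f : lp (fun _ : Z => ℝ) ∞, ∀ c ∈ dualValues K f, L f ≤ c) ∧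
        L v = sInf (dualValues K v) := by
  have hbound (f : lp (fun _ : Z => ℝ) ∞) (z : Z) : |f z| ≤ ‖f‖ :=
    lp.norm_apply_le_norm ENNReal.top_ne_zero f z
  have hne (f : lp (fun _ : Z => ℝ) ∞) : (dualValues K f).Nonempty :=
    ⟨‖f‖, mem_dualValues_of_forall_le fun z => (le_abs_self _).trans (hbound f z)⟩
  have hbdd (f : lp (fun _ : Z => ℝ) ∞) : BddBelow (dualValues K f) :=
    ⟨-‖f‖, fun _ => le_of_mem_dualValues hK fun z => (abs_le.1 (hbound f z)).1⟩
  obtain ⟨L, hL, hLv⟩ := exists_linearMap_le_sublinear_eq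
    (fun f : lp (fun _ : Z => ℝ) ∞ => sInf (dualValues K f))
    (fun c hc f => by
      rw [lp.coeFn_smul, dualValues_smul hc, Real.sInf_smul_of_nonneg hc.le, smul_eq_mul])
    (fun f g => by
      rw [← csInf_add (hne f) (hbdd f) (hne g) (hbdd g)]
      exact csInf_le_csInf (hbdd (f + g)) ((hne f).add (hne g)) dualValues_add_subset) v
  exact ⟨L, fun f c hc => (hL f).trans (csInf_le (hbdd f) hc), hLv⟩

variable [MeasurableSpace Z]

/-- The values of the linear program of maximising `∫ v ∂P` over the probability measures `P` that
annihilate `K`. -/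
def primalValues (K : Submodule ℝ C(Z, ℝ)) (v : Z → ℝ) : Set ℝ :=
  {r | ∃ P : Measure Z, IsProbabilityMeasure P ∧ (∀ k ∈ K, ∫ z, k z ∂P = 0) ∧ r = ∫ z, v z ∂P}

variable [CompactSpace Z] [BorelSpace Z]

lemma le_of_mem_primalValues_of_mem_dualValues {r : ℝ} (hvb : ∃ C, ∀ z, |v z| ≤ C)
    (hv : Measurable v) (hr : r ∈ primalValues K v) (hc : c ∈ dualValues K v) : r ≤ c := by
  obtain ⟨P, hP, hPK, rfl⟩ := hr
  obtain ⟨k, hk, hvk⟩ := hc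
  obtain ⟨C, hC⟩ := hvb
  have hv_int : Integrable v P := .of_bound hv.aestronglyMeasurable C (.of_forall hC)
  have hk_int : Integrable k P := k.continuous.integrable_of_hasCompactSupport (.of_compactSpace k)
  calc ∫ z, v z ∂P
      ≤ ∫ z, (c + k z) ∂P := integral_mono hv_int ((integrable_const c).add hk_int) hvk
    _ = c := by
        rw [integral_add (integrable_const c) hk_int, hPK k hk, integral_const, probReal_univ,
          one_smul, add_zero]

variable [T2Space Z]

lemma exists_isProbabilityMeasure_sInf_dualValues_le (hK : ∀ k ∈ K, ∃ z, k z ≤ 0)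
    (hv : ∃ C, ∀ z, |v z| ≤ C) :
    ∃ P : Measure Z, IsProbabilityMeasure P ∧ (∀ k ∈ K, ∫ z, k z ∂P = 0) ∧
      ∀ g : C(Z, ℝ), (∀ z, v z ≤ g z) → sInf (dualValues K v) ≤ ∫ z, g z ∂P := by
  obtain ⟨C, hC⟩ := hv
  let v' : lp (fun _ : Z => ℝ) ∞ := ⟨v, memℓp_infty ⟨C, forall_mem_range.2 hC⟩⟩
  let ι : C(Z, ℝ) →ₗ[ℝ] lp (fun _ : Z => ℝ) ∞ :=
    { toFun := fun f => ⟨⇑f, memℓp_infty ⟨‖f‖, forall_mem_range.2 f.norm_coe_le_norm⟩⟩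
      map_add' := fun _ _ => rfl
      map_smul' := fun _ _ => rfl }
  obtain ⟨L, hL, hLv⟩ := exists_linearMap_forall_le_dualValues hK v'
  have hL_mono (f g : lp (fun _ : Z => ℝ) ∞) (hfg : ∀ z, f z ≤ g z) : L f ≤ L g := by
    rw [← sub_nonpos, ← map_sub]
    exact hL _ 0 (mem_dualValues_of_forall_le fun z => sub_nonpos.2 (hfg z))
  have hL_one : L (ι 1) = 1 := by
    refine (hL _ 1 (mem_dualValues_of_forall_le fun _ => le_rfl)).antisymm ?_
    rw [← neg_le_neg_iff, ← map_neg]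
    exact hL _ (-1) (mem_dualValues_of_forall_le fun _ => le_rfl)
  have hL_le (k : C(Z, ℝ)) (hk : k ∈ K) : L (ι k) ≤ 0 := hL _ 0 (zero_mem_dualValues hk)
  obtain ⟨P, hP, hPL⟩ := exists_isProbabilityMeasure_forall_integral_eq (L ∘ₗ ι)
    (fun f hf => (map_zero L).ge.trans (hL_mono 0 (ι f) hf)) hL_one
  refine ⟨P, hP, fun k hk => ?_, fun g hg => ?_⟩
  · have hneg := hL_le (-k) (K.neg_mem hk)
    rw [map_neg, map_neg, neg_nonpos] at hneg
    exact (hPL k).trans ((hL_le k hk).antisymm hneg)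
  · exact hLv.ge.trans ((hL_mono v' (ι g) hg).trans_eq (hPL g).symm)

lemma exists_mem_primalValues_sInf_dualValues_le [TopologicalSpace.PseudoMetrizableSpace Z]
    (hK : ∀ k ∈ K, ∃ z, k z ≤ 0) (hvb : ∃ C, ∀ z, |v z| ≤ C) (hv : UpperSemicontinuous v) :
    ∃ r ∈ primalValues K v, sInf (dualValues K v) ≤ r := by
  obtain ⟨P, hP, hPK, hPv⟩ := exists_isProbabilityMeasure_sInf_dualValues_le hK hvb
  obtain ⟨C, hC⟩ := hvb
  obtain ⟨g, hg, hg_lim⟩ :=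
    exists_seq_continuousMap_tendsto_of_upperSemicontinuous hv fun z => (abs_le.1 (hC z)).2
  have hlim : Tendsto (fun k => ∫ z, g k z ∂P) atTop (𝓝 (∫ z, v z ∂P)) := by
    refine tendsto_integral_of_dominated_convergence (fun _ => C)
      (fun k => (g k).continuous.aestronglyMeasurable) (integrable_const C)
      (fun k => .of_forall fun z => ?_) (.of_forall hg_lim)
    exact abs_le.2 ⟨(abs_le.1 (hC z)).1.trans (hg k z).1, (hg k z).2⟩
  exact ⟨∫ z, v z ∂P, ⟨P, hP, hPK, rfl⟩, ge_of_tendsto' hlim fun k => hPv (g k) fun z => (hg k z).1⟩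

theorem isGreatest_primalValues_sInf_dualValues [TopologicalSpace.PseudoMetrizableSpace Z]
    (hK : ∀ k ∈ K, ∃ z, k z ≤ 0) (hvb : ∃ C, ∀ z, |v z| ≤ C) (hv : UpperSemicontinuous v) :
    IsGreatest (primalValues K v) (sInf (dualValues K v)) := by
  have hne : (dualValues K v).Nonempty :=
    hvb.imp fun _ hC => mem_dualValues_of_forall_le fun z => (abs_le.1 (hC z)).2
  have hub : sInf (dualValues K v) ∈ upperBounds (primalValues K v) := fun _ hr =>
    le_csInf hne fun _ => le_of_mem_primalValues_of_mem_dualValues hvb hv.measurable hr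
  obtain ⟨r, hr, hle⟩ := exists_mem_primalValues_sInf_dualValues_le hK hvb hv
  exact ⟨hle.antisymm (hub hr) ▸ hr, hub⟩

end Duality

section FiniteFirstCoordinate

variable {ι X : Type*}

lemma sum_mul_indicator_fst_eq [Fintype ι] (a : ι → ℝ) (z : ι × X) :
    ∑ i, a i * indicator {z : ι × X | z.1 = i} 1 z = a z.1 := by
  classical
  simp [indicator_apply]

variable [MeasurableSpace ι] [MeasurableSingletonClass ι] [MeasurableSpace X]
  {P : Measure (ι × X)} [IsFiniteMeasure P]

lemma integrable_comp_fst [Finite ι] (W : ι → ℝ) : Integrable (fun z => W z.1) P :=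
  (Integrable.of_finite (μ := P.fst)).comp_measurable measurable_fst

lemma integral_comp_fst_eq_sum [Fintype ι] (W : ι → ℝ) :
    ∫ z, W z.1 ∂P = ∑ i, P.fst.real {i} * W i := by
  rw [Measure.fst, ← integral_map (f := W) (by fun_prop) (by fun_prop)]
  exact integral_fintype .of_finite

end FiniteFirstCoordinate

section JointDistribution

variable {Ω : Type} [Fintype Ω] [MeasurableSpace Ω] {p : Ω → ℝ} {X : Type}
  [MeasurableSpace X] {μ : Ω → Measure X}

lemma jointP_apply [∀ ω, IsProbabilityMeasure (μ ω)] {s : Set (Ω × X)} (hs : MeasurableSet s) :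
    jointP p μ s = ∑ ω, ENNReal.ofReal (p ω) * μ ω (Prod.mk ω ⁻¹' s) := by
  simp only [jointP, Measure.finsetSum_apply, Measure.smul_apply, smul_eq_mul, Measure.dirac_prod,
    Measure.map_apply measurable_prodMk_left hs]

lemma isProbabilityMeasure_jointP (hp : p ∈ stdSimplex ℝ Ω) [∀ ω, IsProbabilityMeasure (μ ω)] :
    IsProbabilityMeasure (jointP p μ) := by
  refine ⟨?_⟩
  rw [jointP_apply .univ]
  simp only [preimage_univ, measure_univ, mul_one]
  rw [← ENNReal.ofReal_sum_of_nonneg fun ω _ => hp.1 ω, hp.2, ENNReal.ofReal_one]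

variable [MeasurableSingletonClass Ω]

lemma integral_jointP (hp : ∀ ω, 0 ≤ p ω) [∀ ω, IsProbabilityMeasure (μ ω)] {f : Ω × X → ℝ}
    (hf : ∀ ω, Integrable (fun x => f (ω, x)) (μ ω)) :
    ∫ z, f z ∂jointP p μ = ∑ ω, p ω * ∫ x, f (ω, x) ∂μ ω := by
  have hemb (ω : Ω) := measurableEmbedding_prodMk_left (β := X) ω
  have hint (ω : Ω) : Integrable f ((Measure.dirac ω).prod (μ ω)) := by
    rw [Measure.dirac_prod, (hemb ω).integrable_map_iff]
    exact hf ω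
  rw [jointP, integral_finsetSum_measure fun ω _ => (hint ω).smul_measure ENNReal.ofReal_ne_top]
  refine Finset.sum_congr rfl fun ω _ => ?_
  rw [integral_smul_measure, ENNReal.toReal_ofReal (hp ω), smul_eq_mul, Measure.dirac_prod,
    (hemb ω).integral_map]

lemma fst_real_jointP_singleton (hp : ∀ ω, 0 ≤ p ω) [∀ ω, IsProbabilityMeasure (μ ω)] (ω : Ω) :
    (jointP p μ).fst.real {ω} = p ω := by
  have hω : MeasurableSet {ω} := measurableSet_singleton ω
  rw [measureReal_def, Measure.fst_apply hω, jointP_apply (measurable_fst hω), ← prod_univ,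
    Finset.sum_eq_single_of_mem ω (Finset.mem_univ ω) fun ω' _ hne => ?_]
  · rw [mk_preimage_prod_right (mem_singleton ω), measure_univ, mul_one,
      ENNReal.toReal_ofReal (hp ω)]
  · rw [mk_preimage_prod_right_eq_empty (notMem_singleton_iff.2 hne), measure_empty, mul_zero]

lemma jointP_condKernel [StandardBorelSpace X] [Nonempty X] {P : Measure (Ω × X)}
    [IsFiniteMeasure P] (hP : ∀ ω, P.fst.real {ω} = p ω) : jointP p P.condKernel = P := by
  ext s hs
  conv_rhs => rw [← P.disintegrate P.condKernel, Measure.compProd_apply hs, lintegral_fintype]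
  rw [jointP_apply hs]
  refine Finset.sum_congr rfl fun ω _ => ?_
  rw [← hP, ofReal_measureReal, mul_comm]

end JointDistribution

section Persuasion

variable {Ω : Type} [Fintype Ω] {p : Ω → ℝ} {n : ℕ}

lemma continuous_belief_apply (ω : Ω) : Continuous fun x : Belief Ω => x.1 ω :=
  (continuous_apply ω).comp continuous_subtype_val

section Primal

variable [MeasurableSpace Ω]

/-- Bayes plausibility of a joint distribution of the state and the `n` beliefs: each belief
is the conditional distribution of the state given itself. Conditioning is encoded by testing
against continuous functions of the belief. -/
def BeliefsConsistent (P : Measure (Ω × (Fin n → Belief Ω))) : Prop :=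
  ∀ (i : Fin n) (ω' : Ω) (f : Belief Ω →ᵇ ℝ),
    ∫ z, f (z.2 i) * (z.2 i).1 ω' ∂P = ∫ z, f (z.2 i) * indicator {z | z.1 = ω'} 1 z ∂P

lemma feasible_iff [MeasurableSingletonClass Ω] (hp : p ∈ stdSimplex ℝ Ω)
    {μ : Ω → Measure (Fin n → Belief Ω)} :
    Feasible p n μ ↔ (∀ ω, IsProbabilityMeasure (μ ω)) ∧ BeliefsConsistent (jointP p μ) := by
  refine and_congr_right fun hμ => forall₂_congr fun i ω' => ?_
  have := isProbabilityMeasure_jointP (μ := μ) hp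
  exact comp_ae_eq_condExp_comap_iff (by fun_prop)
    ((integrable_const 1).indicator (measurable_fst (measurableSet_singleton ω')))
    ((continuous_belief_apply ω').integrable_of_hasCompactSupport (.of_compactSpace _))

variable {P : Measure (Ω × (Fin n → Belief Ω))} [IsFiniteMeasure P]

lemma integrable_comp_belief {f : Belief Ω → ℝ} (hf : Continuous f) (i : Fin n) :
    Integrable (fun z => f (z.2 i)) P :=
  (hf.integrable_of_hasCompactSupport (.of_compactSpace f)).comp_measurable
    (g := f) (by fun_prop)

lemma integrable_comp_belief_mul_indicator_fst [MeasurableSingletonClass Ω] {f : Belief Ω → ℝ}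
    (hf : Continuous f) (i : Fin n) (ω : Ω) :
    Integrable (fun z => f (z.2 i) * indicator {z | z.1 = ω} 1 z) P := by
  refine ((integrable_comp_belief hf i).indicator
    (measurable_fst (measurableSet_singleton ω))).congr (.of_forall fun z => ?_)
  by_cases hz : z.1 = ω <;> simp [hz]

lemma BeliefsConsistent.integral_eq_zero [MeasurableSingletonClass Ω] (hP : BeliefsConsistent P)
    (i : Fin n) {φ : Ω → C(Belief Ω, ℝ)} (hφ : ∀ x : Belief Ω, ∑ ω, x.1 ω * φ ω x = 0) :
    ∫ z, φ z.1 (z.2 i) ∂P = 0 := by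
  calc ∫ z, φ z.1 (z.2 i) ∂P
      = ∑ ω, ∫ z, φ ω (z.2 i) * indicator {z | z.1 = ω} 1 z ∂P := by
        rw [← integral_finsetSum _ fun ω _ =>
          integrable_comp_belief_mul_indicator_fst (φ ω).continuous i ω]
        simp_rw [sum_mul_indicator_fst_eq (fun ω => φ ω _)]
    _ = ∑ ω, ∫ z, φ ω (z.2 i) * (z.2 i).1 ω ∂P :=
        Finset.sum_congr rfl fun ω _ =>
          (hP i ω (BoundedContinuousFunction.mkOfCompact (φ ω))).symm
    _ = 0 := by
        rw [← integral_finsetSum _ fun ω _ =>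
          integrable_comp_belief ((φ ω).continuous.fun_mul (continuous_belief_apply ω)) i]
        simp_rw [mul_comm (φ _ _), hφ, integral_zero]

end Primal

variable [TopologicalSpace Ω] [DiscreteTopology Ω]

/-- The function `(ω, x) ↦ W ω + ∑ i, φ i ω (x i)` of the state and the belief profile. -/
def separableMap (W : Ω → ℝ) (φ : Fin n → Ω → C(Belief Ω, ℝ)) :
    C(Ω × (Fin n → Belief Ω), ℝ) where
  toFun z := W z.1 + ∑ i, φ i z.1 (z.2 i)
  continuous_toFun := continuous_prod_of_discrete_left.2 fun ω => by fun_prop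

/-- The separable functions that every joint distribution induced by a feasible collection must
annihilate; these parametrise the constraints of the dual problem. -/
def balancedSeparableMaps (p : Ω → ℝ) (n : ℕ) : Submodule ℝ C(Ω × (Fin n → Belief Ω), ℝ) where
  carrier := {k | ∃ (W : Ω → ℝ) (φ : Fin n → Ω → C(Belief Ω, ℝ)), ∑ ω, p ω * W ω = 0 ∧
    (∀ i (x : Belief Ω), ∑ ω, x.1 ω * φ i ω x = 0) ∧ separableMap W φ = k}
  zero_mem' := ⟨0, 0, by simp, by simp, by ext; simp [separableMap]⟩
  add_mem' := by
    rintro _ _ ⟨W, φ, hW, hφ, rfl⟩ ⟨W', φ', hW', hφ', rfl⟩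
    refine ⟨W + W', φ + φ', ?_, fun i x => ?_, ?_⟩
    · simp [mul_add, Finset.sum_add_distrib, hW, hW']
    · simp [mul_add, Finset.sum_add_distrib, hφ, hφ']
    · ext z
      simp [separableMap, Finset.sum_add_distrib, add_add_add_comm]
  smul_mem' := by
    rintro c _ ⟨W, φ, hW, hφ, rfl⟩
    refine ⟨c • W, c • φ, ?_, fun i x => ?_, ?_⟩
    · simp [mul_left_comm _ c, ← Finset.mul_sum, hW]
    · simp [mul_left_comm _ c, ← Finset.mul_sum, hφ]
    · ext z
      simp [separableMap, mul_add, Finset.mul_sum]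

/-- Revealing nothing is feasible: average over the profiles in which every receiver holds the
prior. -/
lemma exists_apply_nonpos_of_mem_balancedSeparableMaps (hp : p ∈ stdSimplex ℝ Ω)
    {k : C(Ω × (Fin n → Belief Ω), ℝ)} (hk : k ∈ balancedSeparableMaps p n) : ∃ z, k z ≤ 0 := by
  obtain ⟨W, φ, hW, hφ, rfl⟩ := hk
  by_contra! hpos
  let prior : Belief Ω := ⟨p, hp⟩
  have hmean : ∑ ω, p ω • separableMap W φ (ω, fun _ => prior) = 0 := by
    simp only [separableMap, ContinuousMap.coe_mk, smul_eq_mul, mul_add, Finset.sum_add_distrib,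
      Finset.mul_sum]
    rw [hW, zero_add, Finset.sum_comm]
    exact Finset.sum_eq_zero fun i _ => hφ i prior
  exact ((convex_Ioi (0 : ℝ)).sum_mem (fun ω _ => hp.1 ω) hp.2
    fun ω _ => hpos (ω, fun _ => prior)).ne' hmean

lemma setOf_exists_prices_eq_dualValues (hp : ∑ ω, p ω = 1) (v : Ω → (Fin n → Belief Ω) → ℝ) :
    {r : ℝ | ∃ (V : Ω → ℝ) (φ : Fin n → Ω → Belief Ω → ℝ),
        (∀ (i : Fin n) (ω : Ω), Continuous (φ i ω)) ∧
        (∀ (ω : Ω) (x : Fin n → Belief Ω), v ω x ≤ V ω + ∑ i : Fin n, φ i ω (x i)) ∧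
        (∀ (i : Fin n) (x : Belief Ω), ∑ ω : Ω, x.1 ω * φ i ω x = 0) ∧
        r = ∑ ω : Ω, p ω * V ω } =
      dualValues (balancedSeparableMaps p n) (uncurry v) := by
  ext r
  constructor
  · rintro ⟨V, φ, hφ, hle, hbal, rfl⟩
    set r := ∑ ω, p ω * V ω
    refine ⟨_, ⟨fun ω => V ω - r, fun i ω => ⟨φ i ω, hφ i ω⟩, ?_, hbal, rfl⟩, fun z => ?_⟩
    · simp_rw [mul_sub]
      rw [Finset.sum_sub_distrib, ← Finset.sum_mul, hp, one_mul, sub_self]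
    · refine (hle z.1 z.2).trans_eq ?_
      simp only [separableMap, ContinuousMap.coe_mk]
      ring
  · rintro ⟨_, ⟨W, φ, hW, hbal, rfl⟩, hle⟩
    refine ⟨fun ω => r + W ω, fun i ω => φ i ω, fun i ω => (φ i ω).continuous,
      fun ω x => (hle (ω, x)).trans_eq (add_assoc _ _ _).symm, hbal, ?_⟩
    simp_rw [mul_add]
    rw [Finset.sum_add_distrib, ← Finset.sum_mul, hp, hW, one_mul, add_zero]

lemma separableMap_zero_single (i : Fin n) (φ : Ω → C(Belief Ω, ℝ))
    (z : Ω × (Fin n → Belief Ω)) : separableMap 0 (Pi.single i φ) z = φ z.1 (z.2 i) := by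
  simp only [separableMap, ContinuousMap.coe_mk, Pi.zero_apply, zero_add]
  rw [Finset.sum_eq_single_of_mem i (Finset.mem_univ i) fun j _ hj => ?_, Pi.single_eq_same]
  rw [Pi.single_eq_of_ne hj, Pi.zero_apply, ContinuousMap.zero_apply]

section Annihilation

variable [MeasurableSpace Ω] [MeasurableSingletonClass Ω]
  {P : Measure (Ω × (Fin n → Belief Ω))}

lemma beliefsConsistent_of_forall_integral_eq_zero [IsFiniteMeasure P]
    (hP : ∀ k ∈ balancedSeparableMaps p n, ∫ z, k z ∂P = 0) : BeliefsConsistent P := by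
  classical
  intro i ω' f
  let φ (ω : Ω) : C(Belief Ω, ℝ) :=
    ⟨fun x => f x * x.1 ω' - f x * indicator {ω | ω = ω'} 1 ω,
      (f.continuous.mul (continuous_belief_apply ω')).sub (by fun_prop)⟩
  have hφ (x : Belief Ω) : ∑ ω, x.1 ω * φ ω x = 0 := calc
    ∑ ω, x.1 ω * φ ω x
      = f x * x.1 ω' * ∑ ω, x.1 ω - f x * ∑ ω, x.1 ω * indicator {ω | ω = ω'} 1 ω := by
        rw [Finset.mul_sum, Finset.mul_sum, ← Finset.sum_sub_distrib]
        exact Finset.sum_congr rfl fun ω _ => by simp only [φ, ContinuousMap.coe_mk]; ring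
    _ = 0 := by simp [x.2.2, indicator_apply]
  have hmem : separableMap 0 (Pi.single i φ) ∈ balancedSeparableMaps p n := by
    refine ⟨0, _, by simp, fun j x => ?_, rfl⟩
    rcases eq_or_ne j i with rfl | hj
    · rw [Pi.single_eq_same, hφ]
    · simp [hj]
  have hzero := hP _ hmem
  simp_rw [separableMap_zero_single] at hzero
  refine sub_eq_zero.1 ?_
  rw [← integral_sub
    (integrable_comp_belief (f.continuous.fun_mul (continuous_belief_apply ω')) i)
    (integrable_comp_belief_mul_indicator_fst f.continuous i ω')]
  exact hzero

variable [IsProbabilityMeasure P]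

lemma fst_real_singleton_of_forall_integral_eq_zero (hp : ∑ ω, p ω = 1)
    (hP : ∀ k ∈ balancedSeparableMaps p n, ∫ z, k z ∂P = 0) (ω : Ω) : P.fst.real {ω} = p ω := by
  classical
  have hmem : separableMap (fun ω' => Pi.single (M := fun _ => ℝ) ω 1 ω' - p ω) 0 ∈
      balancedSeparableMaps p n := by
    refine ⟨_, _, ?_, by simp, rfl⟩
    simp_rw [mul_sub]
    rw [Finset.sum_sub_distrib, ← Finset.sum_mul, hp, one_mul]
    simp [Pi.single_apply]
  have hzero := hP _ hmem
  simp only [separableMap, ContinuousMap.coe_mk, Pi.zero_apply, ContinuousMap.zero_apply,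
    Finset.sum_const_zero, add_zero] at hzero
  rw [integral_sub (integrable_comp_fst _) (integrable_const _), integral_comp_fst_eq_sum,
    integral_const, probReal_univ, one_smul, sub_eq_zero] at hzero
  simpa [Pi.single_apply] using hzero

lemma forall_integral_eq_zero_iff (hp : ∑ ω, p ω = 1) :
    (∀ k ∈ balancedSeparableMaps p n, ∫ z, k z ∂P = 0) ↔
      (∀ ω, P.fst.real {ω} = p ω) ∧ BeliefsConsistent P := by
  refine ⟨fun hP => ⟨fst_real_singleton_of_forall_integral_eq_zero hp hP,
    beliefsConsistent_of_forall_integral_eq_zero hP⟩, ?_⟩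
  rintro ⟨hfst, hcons⟩ _ ⟨W, φ, hW, hφ, rfl⟩
  have hφ_int (i : Fin n) : Integrable (fun z => φ i z.1 (z.2 i)) P := by
    simp_rw [← separableMap_zero_single]
    exact (ContinuousMap.continuous _).integrable_of_hasCompactSupport (.of_compactSpace _)
  calc ∫ z, separableMap W φ z ∂P
      = ∫ z, W z.1 ∂P + ∑ i, ∫ z, φ i z.1 (z.2 i) ∂P := by
        rw [← integral_finsetSum _ fun i _ => hφ_int i]
        exact integral_add (integrable_comp_fst W) (integrable_finsetSum _ fun i _ => hφ_int i)
    _ = 0 := by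
        rw [integral_comp_fst_eq_sum, Finset.sum_eq_zero fun i _ => hcons.integral_eq_zero i (hφ i)]
        simp_rw [hfst, hW, add_zero]

end Annihilation

variable [MeasurableSpace Ω] [MeasurableSingletonClass Ω]

lemma setOf_exists_feasible_eq_primalValues (hp : p ∈ stdSimplex ℝ Ω)
    {v : Ω → (Fin n → Belief Ω) → ℝ} (hvb : ∃ C, ∀ ω x, |v ω x| ≤ C)
    (hv : ∀ ω, UpperSemicontinuous (v ω)) :
    {r | ∃ μ : Ω → Measure (Fin n → Belief Ω),
        Feasible p n μ ∧ r = ∑ ω, p ω * ∫ x, v ω x ∂(μ ω)} =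
      primalValues (balancedSeparableMaps p n) (uncurry v) := by
  obtain ⟨C, hC⟩ := hvb
  have hint (μ : Ω → Measure (Fin n → Belief Ω)) [∀ ω, IsProbabilityMeasure (μ ω)] :
      ∫ z, uncurry v z ∂jointP p μ = ∑ ω, p ω * ∫ x, v ω x ∂μ ω :=
    integral_jointP hp.1 fun ω =>
      .of_bound (hv ω).measurable.aestronglyMeasurable C (.of_forall (hC ω))
  ext r
  constructor
  · rintro ⟨μ, hfeas, rfl⟩
    obtain ⟨hμ, hcons⟩ := (feasible_iff hp).1 hfeas
    have hP := isProbabilityMeasure_jointP (μ := μ) hp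
    exact ⟨jointP p μ, hP, (forall_integral_eq_zero_iff hp.2).2
      ⟨fst_real_jointP_singleton hp.1, hcons⟩, (hint μ).symm⟩
  · rintro ⟨P, hP, hPK, rfl⟩
    have : Nonempty (Belief Ω) := ⟨⟨p, hp⟩⟩
    obtain ⟨hfst, hcons⟩ := (forall_integral_eq_zero_iff hp.2).1 hPK
    have hdisint := jointP_condKernel hfst
    refine ⟨P.condKernel, (feasible_iff hp).2 ⟨inferInstance, hdisint.symm ▸ hcons⟩, ?_⟩
    rw [← hint, hdisint]

end Persuasion

theorem value_eq_inf_dual_general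
    {Ω : Type} [Fintype Ω] [MeasurableSpace Ω] [MeasurableSingletonClass Ω]
    (p : Ω → ℝ) (hp : p ∈ stdSimplex ℝ Ω) (n : ℕ)
    (v : Ω → (Fin n → Belief Ω) → ℝ)
    (hvb : ∃ C : ℝ, ∀ ω x, |v ω x| ≤ C)
    (hvusc : ∀ ω, UpperSemicontinuous (v ω)) :
    Val p n v =
      sInf { r : ℝ | ∃ (V : Ω → ℝ) (φ : Fin n → Ω → Belief Ω → ℝ),
        (∀ (i : Fin n) (ω : Ω), Continuous (φ i ω)) ∧
        (∀ (ω : Ω) (x : Fin n → Belief Ω), v ω x ≤ V ω + ∑ i : Fin n, φ i ω (x i)) ∧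
        (∀ (i : Fin n) (x : Belief Ω), ∑ ω : Ω, x.1 ω * φ i ω x = 0) ∧
        r = ∑ ω : Ω, p ω * V ω } := by
  let _ : TopologicalSpace Ω := ⊥
  have _ : DiscreteTopology Ω := ⟨rfl⟩
  have hbdd : ∃ C, ∀ z, |uncurry v z| ≤ C := hvb.imp fun _ hC z => hC z.1 z.2
  rw [Val, setOf_exists_feasible_eq_primalValues hp hvb hvusc,
    setOf_exists_prices_eq_dualValues hp.2 v]
  exact (isGreatest_primalValues_sInf_dualValues
    (fun _ => exists_apply_nonpos_of_mem_balancedSeparableMaps hp) hbdd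
    (upperSemicontinuous_uncurry hvusc)).csSup_eq

/-- dual value representation (Proposition `prop_dual value representation`). -/
theorem value_eq_inf_dual
    {Ω : Type} [Fintype Ω] [Nonempty Ω] [MeasurableSpace Ω] [MeasurableSingletonClass Ω]
    (p : Ω → ℝ) (hp : ∀ ω, 0 < p ω) (hpsum : ∑ ω : Ω, p ω = 1)
    (n : ℕ) (hn : 1 ≤ n)
    (v : Ω → (Fin n → Belief Ω) → ℝ)
    (hvb : ∃ C : ℝ, ∀ ω x, |v ω x| ≤ C)
    (hvusc : ∀ ω, UpperSemicontinuous (v ω)) :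
    Val p n v =
      sInf { r : ℝ | ∃ (V : Ω → ℝ) (φ : Fin n → Ω → Belief Ω → ℝ),
        (∀ (i : Fin n) (ω : Ω), Continuous (φ i ω)) ∧
        (∀ (ω : Ω) (x : Fin n → Belief Ω), v ω x ≤ V ω + ∑ i : Fin n, φ i ω (x i)) ∧
        (∀ (i : Fin n) (x : Belief Ω), ∑ ω : Ω, x.1 ω * φ i ω x = 0) ∧
        r = ∑ ω : Ω, p ω * V ω } :=
  value_eq_inf_dual_general p ⟨fun ω => (hp ω).le, hpsum⟩ n v hvb hvusc
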